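/- Let k ≥ 1, 0 < s < 1, and ε₁, …, ε_k > 0. Then ∫_{S^{k−1}} (∑_{j=1}^k εⱼ² xⱼ²)^{−(k+2s)/2} dσ(x) = (π^{k/2}/(Γ(1−s)·Γ((k+2s)/2)))·∑_{i=1}^k ε_i^{−2s}·∫_0^∞ t^{(k+2s)/2 − 1}/((1+t)·∏_{j=1}^k (ε_i² + εⱼ² t)^{1/2}) dt, where all the integrals on the right are finite. -/

import Mathlib

open MeasureTheory

lemma radial (k : ℕ) (hk : 1 ≤ k) (s : ℝ) (hs0 : 0 < s) (q : ℝ) (hq : 0 < q) :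
    ∫⁻ r in Set.Ioi (0:ℝ), ENNReal.ofReal (r ^ (k-1)) * ENNReal.ofReal (r ^ (2*s) * Real.exp (-(q * r^2)))
     = ENNReal.ofReal (Real.Gamma (((k : ℝ) + 2 * s) / 2) / 2) * ENNReal.ofReal (q ^ (-(((k : ℝ) + 2 * s) / 2))) := by
  have hG : 0 < Real.Gamma (((k : ℝ) + 2 * s) / 2) := Real.Gamma_pos_of_pos (by positivity)
  have hk' : ((k - 1 : ℕ) : ℝ) = (k : ℝ) - 1 := by simp [hk]
  have hk1 : (1:ℝ) ≤ k := by exact_mod_cast hk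
  rw [← ENNReal.ofReal_mul (by positivity)]
  have h1 := integral_rpow_mul_exp_neg_mul_rpow (p := 2) (q := k - 1 + 2 * s) (b := q) two_pos (by linarith) hq
  have h2 := integrableOn_rpow_mul_exp_neg_mul_rpow (p := 2) (s := k - 1 + 2 * s) (b := q) (by linarith) two_pos hq
  have h3 : Real.Gamma (((k : ℝ) + 2 * s) / 2) / 2 * q ^ (-(((k : ℝ) + 2 * s) / 2)) =
     ∫ x in Set.Ioi (0:ℝ), x ^ ((k:ℝ) - 1 + 2 * s) * Real.exp (-q * x ^ (2:ℝ)) := by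
    rw [h1]
    have : (k:ℝ) - 1 + 2 * s + 1 = k + 2 * s := by ring
    rw [this, neg_div]; ring
  rw [h3, ofReal_integral_eq_lintegral_ofReal h2]
  · refine setLIntegral_congr_fun measurableSet_Ioi fun r hr => ?_
    have hr : 0 < r := hr
    rw [← ENNReal.ofReal_mul (by positivity)]
    congr 1
    rw [← mul_assoc, ← Real.rpow_natCast, hk', ← Real.rpow_add hr, neg_mul]
    norm_cast
  · filter_upwards [ae_restrict_mem measurableSet_Ioi] with r hr
    have hr : 0 < r := hr
    simp only [Pi.zero_apply]; positivity

lemma gam (s : ℝ) (hs1 : s < 1) (q : ℝ) (hq : 0 < q) :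
    ∫⁻ u in Set.Ioi (0:ℝ), ENNReal.ofReal (u ^ (-s) * Real.exp (-(u * q)))
     = ENNReal.ofReal (Real.Gamma (1 - s)) * ENNReal.ofReal (q ^ (s - 1)) := by
  have hG : 0 < Real.Gamma (1 - s) := Real.Gamma_pos_of_pos (by linarith)
  rw [← ENNReal.ofReal_mul (by positivity)]
  have h1 := integral_rpow_mul_exp_neg_mul_rpow (p := 1) (q := -s) (b := q) one_pos (by linarith) hq
  have h2 := integrableOn_rpow_mul_exp_neg_mul_rpow (p := 1) (s := -s) (b := q) (by linarith) one_pos hq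
  have h3 : Real.Gamma (1 - s) * q ^ (s - 1) =
     ∫ x in Set.Ioi (0:ℝ), x ^ (-s) * Real.exp (-q * x ^ (1:ℝ)) := by
    rw [h1]
    have : -s + 1 = 1 - s := by ring
    rw [this, div_one, div_one]
    have : -(1 - s) = s - 1 := by ring
    rw [this]; ring
  rw [h3, ofReal_integral_eq_lintegral_ofReal h2]
  · refine setLIntegral_congr_fun measurableSet_Ioi fun r hr => ?_
    simp only [Real.rpow_one, neg_mul, mul_comm q]
  · filter_upwards [ae_restrict_mem measurableSet_Ioi] with r hr
    have hr : 0 < r := hr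
    simp only [Pi.zero_apply]; positivity

lemma gauss1 (b : ℝ) (hb : 0 < b) :
    ∫ x : ℝ, x^2 * Real.exp (-b * x^2) = (2 * b)⁻¹ * (√Real.pi * (√b)⁻¹) := by
  have h := integral_comp_abs (f := fun x => x^2 * Real.exp (-b * x^2))
  simp only [sq_abs] at h
  rw [h]
  have h1 := integral_rpow_mul_exp_neg_mul_rpow (p := 2) (q := 2) (b := b) two_pos (by norm_num) hb
  simp only [Real.rpow_two] at h1
  rw [h1]
  have e1 : ((2:ℝ) + 1) / 2 = 1/2 + 1 := by norm_num
  rw [neg_div, e1, Real.Gamma_add_one (by norm_num), Real.Gamma_one_half_eq, Real.rpow_neg hb.le,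
    Real.rpow_add hb, Real.rpow_one, ← Real.sqrt_eq_rpow]
  rw [mul_inv, mul_inv]; ring

lemma gauss (k : ℕ) (a : Fin k → ℝ) (ha : ∀ j, 0 < a j) (i : Fin k) :
    ∫⁻ x : EuclideanSpace ℝ (Fin k), ENNReal.ofReal (x i ^ 2 * Real.exp (-∑ j, a j * x j ^ 2))
     = ENNReal.ofReal (Real.pi ^ ((k:ℝ)/2) / 2) * ENNReal.ofReal ((a i)⁻¹ * ∏ j, (√(a j))⁻¹) := by
  let f : Fin k → ℝ → ℝ := fun j y => (if j = i then y^2 else 1) * Real.exp (-a j * y^2)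
  have hf : ∀ x : Fin k → ℝ, x i ^ 2 * Real.exp (-∑ j, a j * x j ^ 2) = ∏ j, f j (x j) := by
    intro x
    simp only [f, Finset.prod_mul_distrib, Finset.prod_ite_eq', Finset.mem_univ, if_true]
    rw [← Real.exp_sum, ← Finset.sum_neg_distrib]
    simp
  have hint : ∀ j, Integrable (f j) := by
    intro j
    by_cases h : j = i
    · simp only [f, h, if_true]
      have := integrable_rpow_mul_exp_neg_mul_sq (ha i) (s := 2) (by norm_num)
      simpa using this
    · simp only [f, h, if_false, one_mul]
      exact integrable_exp_neg_mul_sq (ha j)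
  have hval : ∀ j, ∫ y, f j y = (if j = i then (2 * a i)⁻¹ else 1) * (√Real.pi * (√(a j))⁻¹) := by
    intro j
    by_cases h : j = i
    · simp only [f, h, if_true]
      exact gauss1 _ (ha i)
    · simp only [f, h, if_false, one_mul]
      rw [integral_gaussian, Real.sqrt_div Real.pi_pos.le]; rfl
  have hpi : 0 ≤ Real.pi ^ ((k:ℝ)/2) / 2 := by positivity
  rw [← ENNReal.ofReal_mul hpi]
  rw [← (PiLp.volume_preserving_toLp (Fin k)).lintegral_comp_emb (MeasurableEquiv.toLp 2 (Fin k → ℝ)).measurableEmbedding]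
  simp only [hf]
  rw [← ofReal_integral_eq_lintegral_ofReal]
  · congr 1
    rw [integral_fintype_prod_volume_eq_prod f]
    simp only [hval, Finset.prod_mul_distrib, Finset.prod_ite_eq', Finset.mem_univ, if_true]
    simp only [Finset.prod_const, Finset.card_univ, Fintype.card_fin]
    rw [Real.sqrt_eq_rpow, ← Real.rpow_natCast, ← Real.rpow_mul Real.pi_pos.le, mul_inv]
    rw [show (1/2 * (k:ℝ)) = k / 2 by ring]; ring
  · exact Integrable.fintype_prod hint
  · filter_upwards with x
    rw [← hf]; simp only [Pi.zero_apply]; positivity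

lemma polar (k : ℕ) (hk : 1 ≤ k) (s : ℝ) (hs0 : 0 < s) 
    (ε : Fin k → ℝ) (hε : ∀ j, 0 < ε j) :
    ∫⁻ x : EuclideanSpace ℝ (Fin k), ENNReal.ofReal (‖x‖ ^ (2*s) * Real.exp (-∑ j, ε j ^ 2 * x j ^ 2))
     = ENNReal.ofReal (Real.Gamma (((k : ℝ) + 2 * s) / 2) / 2) *
     ∫⁻ x : Metric.sphere (0 : EuclideanSpace ℝ (Fin k)) 1,
        ENNReal.ofReal ((∑ j, ε j ^ 2 * ((x : EuclideanSpace ℝ (Fin k)) j) ^ 2) ^ (-(((k : ℝ) + 2 * s) / 2)))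
        ∂(volume : Measure (EuclideanSpace ℝ (Fin k))).toSphere := by
  have : Nonempty (Fin k) := ⟨⟨0, hk⟩⟩
  have hmeas : Measurable fun x : (EuclideanSpace ℝ (Fin k)) => ENNReal.ofReal (‖x‖ ^ (2*s) * Real.exp (-∑ j, ε j ^ 2 * x j ^ 2)) := by
    fun_prop
  have hmeas2 : Measurable fun x : (EuclideanSpace ℝ (Fin k)) => ENNReal.ofReal ((∑ j, ε j ^ 2 * (x j) ^ 2) ^ (-(((k : ℝ) + 2 * s) / 2))) := by
    fun_prop
  have hs : MeasurableSet ({0}ᶜ : Set (EuclideanSpace ℝ (Fin k))) := (measurableSet_singleton _).compl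
  have hmeas3 : Measurable fun x : Metric.sphere (0 : EuclideanSpace ℝ (Fin k)) 1 => ENNReal.ofReal ((∑ j, ε j ^ 2 * ((x : EuclideanSpace ℝ (Fin k)) j) ^ 2) ^ (-(((k : ℝ) + 2 * s) / 2))) := hmeas2.comp measurable_subtype_coe
  rw [← lintegral_const_mul _ hmeas3]
  conv_lhs => rw [← restrict_compl_singleton (μ := (volume : Measure (EuclideanSpace ℝ (Fin k)))) 0,
    ← lintegral_subtype_comap hs]
  have key := (volume : Measure (EuclideanSpace ℝ (Fin k))).measurePreserving_homeomorphUnitSphereProd.symm (homeomorphUnitSphereProd (EuclideanSpace ℝ (Fin k))).toMeasurableEquiv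
  rw [← key.lintegral_comp_emb (MeasurableEquiv.measurableEmbedding _), lintegral_prod]
  · refine lintegral_congr fun x => ?_
    have hx : ‖(x : (EuclideanSpace ℝ (Fin k)))‖ = 1 := by simp
    have hq : 0 < ∑ j, ε j ^ 2 * ((x : (EuclideanSpace ℝ (Fin k))) j) ^ 2 := by
      have h0 : (x : (EuclideanSpace ℝ (Fin k))) ≠ 0 := by intro h; rw [h] at hx; simp at hx
      obtain ⟨j, hj⟩ : ∃ j, (x : (EuclideanSpace ℝ (Fin k))) j ≠ 0 := by
        by_contra! h
        exact h0 (by ext j; simpa using h j)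
      refine Finset.sum_pos' (fun j _ => by positivity) ⟨j, Finset.mem_univ _, ?_⟩
      have := hε j
      positivity
    rw [← radial k hk s hs0 _ hq]
    rw [Measure.volumeIoiPow, lintegral_withDensity_eq_lintegral_mul]
    · rw [← lintegral_subtype_comap measurableSet_Ioi]
      refine lintegral_congr fun r => ?_
      have hr : 0 < (r:ℝ) := r.2
      have e : (((homeomorphUnitSphereProd (EuclideanSpace ℝ (Fin k))).toMeasurableEquiv.symm (x, r) : ({0}ᶜ : Set (EuclideanSpace ℝ (Fin k)))) : (EuclideanSpace ℝ (Fin k))) = (r:ℝ) • (x:(EuclideanSpace ℝ (Fin k))) := rfl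
      simp only [Pi.mul_apply, e, norm_smul, hx, mul_one, Real.norm_eq_abs, abs_of_pos hr,
        PiLp.smul_apply, smul_eq_mul, mul_pow, finrank_euclideanSpace_fin]
      congr 5
      rw [Finset.sum_mul]
      exact Finset.sum_congr rfl fun j _ => by ring
    · fun_prop
    · exact hmeas.comp (measurable_subtype_coe.comp ((MeasurableEquiv.measurable _).comp measurable_prodMk_left))
  · exact (hmeas.comp (measurable_subtype_coe.comp (MeasurableEquiv.measurable _))).aemeasurable

lemma key_subst (k : ℕ) (s : ℝ) (ε : Fin k → ℝ) (hε : ∀ j, 0 < ε j) (i : Fin k) :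
    ∫⁻ u in Set.Ioi (0:ℝ), ENNReal.ofReal (u ^ (-s) * ((ε i ^ 2 + u)⁻¹ * ∏ j, (√(ε j ^ 2 + u))⁻¹)) =
    ENNReal.ofReal (ε i ^ (-(2 * s))) * ∫⁻ t in Set.Ioi (0 : ℝ), ENNReal.ofReal (
          t ^ (((k : ℝ) + 2 * s) / 2 - 1) / ((1 + t) * ∏ j, Real.sqrt (ε i ^ 2 + ε j ^ 2 * t))) := by
  have hi := hε i
  rw [← lintegral_const_mul _ (by fun_prop)]
  have himg : (fun t : ℝ => ε i ^ 2 / t) '' Set.Ioi 0 = Set.Ioi 0 := by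
    ext u
    constructor
    · rintro ⟨t, ht, rfl⟩
      have ht : 0 < t := ht
      simp only [Set.mem_Ioi]; positivity
    · intro hu
      have hu : 0 < u := hu
      refine ⟨ε i ^ 2 / u, by simp only [Set.mem_Ioi]; positivity, ?_⟩
      simp only; field_simp
  conv_lhs => rw [← himg]
  rw [lintegral_image_eq_lintegral_abs_deriv_mul (f' := fun t => -(ε i ^ 2 / t^2)) measurableSet_Ioi]
  · refine setLIntegral_congr_fun measurableSet_Ioi fun t ht => ?_
    have ht : 0 < t := ht
    rw [← ENNReal.ofReal_mul (by positivity), ← ENNReal.ofReal_mul (by positivity)]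
    congr 1
    have h1 : ∀ j, (√(ε j ^ 2 + ε i ^ 2 / t))⁻¹ = √t * (√(ε i ^ 2 + ε j ^ 2 * t))⁻¹ := by
      intro j
      rw [show ε j ^ 2 + ε i ^ 2 / t = (ε i ^ 2 + ε j ^ 2 * t) / t by field_simp; ring,
        Real.sqrt_div' _ ht.le, inv_div]; rfl
    simp only [h1, Finset.prod_mul_distrib, Finset.prod_const, Finset.card_univ, Fintype.card_fin, Finset.prod_inv_distrib]
    have h2 : (√t)^k = t ^ ((k:ℝ)/2) := by
      rw [Real.sqrt_eq_rpow, ← Real.rpow_natCast, ← Real.rpow_mul ht.le]; congr 1; ring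
    have h3 : (ε i ^ 2 / t) ^ (-s) = ε i ^ (-(2*s)) * t ^ s := by
      rw [Real.div_rpow (by positivity) ht.le, ← Real.rpow_natCast, ← Real.rpow_mul hi.le, Real.rpow_neg ht.le, div_inv_eq_mul]
      congr 2; push_cast; ring
    have h4 : t ^ (((k : ℝ) + 2 * s) / 2 - 1) = t ^ ((k:ℝ)/2) * t ^ s / t := by
      rw [← Real.rpow_add ht, Real.rpow_sub_one ht.ne']; congr 2; ring
    rw [h2, h3, h4, abs_neg, abs_of_pos (by positivity)]
    have hP : 0 < ∏ j, √(ε i ^ 2 + ε j ^ 2 * t) := Finset.prod_pos fun j _ => by positivity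
    field_simp
    ring
  · intro t ht
    have ht : 0 < t := ht
    have := ((hasDerivAt_inv ht.ne').const_mul (ε i ^ 2)).hasDerivWithinAt (s := Set.Ioi 0)
    have e2 : -(ε i ^ 2 / t ^ 2) = ε i ^ 2 * -(t ^ 2)⁻¹ := by ring
    have e3 : (fun t : ℝ => ε i ^ 2 / t) = fun t => ε i ^ 2 * t⁻¹ := by ext t; rfl
    rw [e2, e3]; exact this
  · intro x hx y hy h
    have hx : 0 < x := hx
    have hy : 0 < y := hy
    simp only at h
    field_simp at h
    exact h.symm

lemma key_main (k : ℕ) (hk : 1 ≤ k) (s : ℝ) (hs1 : s < 1)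
    (ε : Fin k → ℝ) (hε : ∀ j, 0 < ε j) :
    ENNReal.ofReal (Real.Gamma (1 - s)) *
    ∫⁻ x : EuclideanSpace ℝ (Fin k), ENNReal.ofReal (‖x‖ ^ (2*s) * Real.exp (-∑ j, ε j ^ 2 * x j ^ 2))
     = ENNReal.ofReal (Real.pi ^ ((k:ℝ)/2) / 2) * ∑ i, ∫⁻ u in Set.Ioi (0:ℝ), ENNReal.ofReal (u ^ (-s) * ((ε i ^ 2 + u)⁻¹ * ∏ j, (√(ε j ^ 2 + u))⁻¹)) := by
  have : Nonempty (Fin k) := ⟨⟨0, hk⟩⟩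
  rw [← lintegral_const_mul _ (by fun_prop)]
  have h1 : ∀ᵐ x : (EuclideanSpace ℝ (Fin k)), ENNReal.ofReal (Real.Gamma (1 - s)) * ENNReal.ofReal (‖x‖ ^ (2*s) * Real.exp (-∑ j, ε j ^ 2 * x j ^ 2))
    = ∫⁻ u in Set.Ioi (0:ℝ), ∑ i, ENNReal.ofReal (u ^ (-s)) * ENNReal.ofReal (x i ^ 2 * Real.exp (-∑ j, (ε j ^ 2 + u) * x j ^ 2)) := by
    have h0 : ∀ᵐ x : (EuclideanSpace ℝ (Fin k)), x ≠ 0 := by simp [ae_iff]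
    filter_upwards [h0] with x hx
    have hx : 0 < ‖x‖ := norm_pos_iff.2 hx
    have hn : ∑ j, x j ^ 2 = ‖x‖ ^ 2 := by rw [EuclideanSpace.real_norm_sq_eq]
    have e : ∀ u ∈ Set.Ioi (0:ℝ), ∑ i, ENNReal.ofReal (u ^ (-s)) * ENNReal.ofReal (x i ^ 2 * Real.exp (-∑ j, (ε j ^ 2 + u) * x j ^ 2))
      = ENNReal.ofReal (‖x‖ ^ 2 * Real.exp (-∑ j, ε j ^ 2 * x j ^ 2)) * ENNReal.ofReal (u ^ (-s) * Real.exp (-(u * ‖x‖ ^ 2))) := by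
      intro u hu
      have hu : 0 < u := hu
      rw [← Finset.mul_sum, ← ENNReal.ofReal_sum_of_nonneg (fun _ _ => by positivity), ← ENNReal.ofReal_mul (by positivity),
        ← ENNReal.ofReal_mul (by positivity)]
      congr 1
      rw [← Finset.sum_mul, hn]
      simp only [add_mul, Finset.sum_add_distrib, ← Finset.mul_sum, hn, neg_add, Real.exp_add]
      ring
    rw [setLIntegral_congr_fun measurableSet_Ioi e, lintegral_const_mul _ (by fun_prop), gam s hs1 _ (by positivity), mul_left_comm]
    congr 1
    rw [← ENNReal.ofReal_mul (by positivity)]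
    congr 1
    rw [← Real.rpow_natCast, ← Real.rpow_mul hx.le, mul_right_comm, ← Real.rpow_add hx]
    congr 2; push_cast; ring
  rw [lintegral_congr_ae h1, lintegral_lintegral_swap (by fun_prop), Finset.mul_sum]
  have h2 : ∀ u ∈ Set.Ioi (0:ℝ), (∫⁻ x : (EuclideanSpace ℝ (Fin k)), ∑ i, ENNReal.ofReal (u ^ (-s)) * ENNReal.ofReal (x i ^ 2 * Real.exp (-∑ j, (ε j ^ 2 + u) * x j ^ 2)))
     = ∑ i, ENNReal.ofReal (Real.pi ^ ((k:ℝ)/2) / 2) * ENNReal.ofReal (u ^ (-s) * ((ε i ^ 2 + u)⁻¹ * ∏ j, (√(ε j ^ 2 + u))⁻¹)) := by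
    intro u hu
    have hu : 0 < u := hu
    rw [lintegral_finsetSum _ (fun i _ => by fun_prop)]
    refine Finset.sum_congr rfl fun i _ => ?_
    rw [lintegral_const_mul _ (by fun_prop), gauss k (fun j => ε j ^ 2 + u) (fun j => by positivity) i,
      mul_left_comm, ENNReal.ofReal_mul (p := u ^ (-s)) (by positivity)]
  rw [setLIntegral_congr_fun measurableSet_Ioi h2, lintegral_finsetSum _ (fun i _ => by fun_prop)]
  exact Finset.sum_congr rfl fun i _ => lintegral_const_mul _ (by fun_prop)

theorem stmt14 (k : ℕ) (hk : 1 ≤ k) (s : ℝ) (hs0 : 0 < s) (hs1 : s < 1)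
    (ε : Fin k → ℝ) (hε : ∀ j, 0 < ε j) :
    (∀ i : Fin k, IntegrableOn (fun t : ℝ =>
        t ^ (((k : ℝ) + 2 * s) / 2 - 1) / ((1 + t) * ∏ j, Real.sqrt (ε i ^ 2 + ε j ^ 2 * t)))
        (Set.Ioi 0)) ∧
    (∫ x : Metric.sphere (0 : EuclideanSpace ℝ (Fin k)) 1,
        (∑ j, ε j ^ 2 * ((x : EuclideanSpace ℝ (Fin k)) j) ^ 2) ^ (-(((k : ℝ) + 2 * s) / 2))
        ∂(volume : Measure (EuclideanSpace ℝ (Fin k))).toSphere) =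
      Real.pi ^ ((k : ℝ) / 2) / (Real.Gamma (1 - s) * Real.Gamma (((k : ℝ) + 2 * s) / 2)) *
        ∑ i, ε i ^ (-(2 * s)) * ∫ t in Set.Ioi (0 : ℝ),
          t ^ (((k : ℝ) + 2 * s) / 2 - 1) / ((1 + t) * ∏ j, Real.sqrt (ε i ^ 2 + ε j ^ 2 * t)) := by
  have hG1 : 0 < Real.Gamma (((k : ℝ) + 2 * s) / 2) := Real.Gamma_pos_of_pos (by positivity)
  have hG2 : 0 < Real.Gamma (1 - s) := Real.Gamma_pos_of_pos (by linarith)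
  have hM := key_main k hk s hs1 ε hε
  rw [polar k hk s hs0 ε hε] at hM
  simp only [key_subst k s ε hε] at hM
  have hcont : Continuous fun x : Metric.sphere (0 : EuclideanSpace ℝ (Fin k)) 1 =>
      (∑ j, ε j ^ 2 * ((x : EuclideanSpace ℝ (Fin k)) j) ^ 2) ^ (-(((k : ℝ) + 2 * s) / 2)) := by
    refine Continuous.rpow_const (by fun_prop) fun x => Or.inl ?_
    have hx : ‖(x : EuclideanSpace ℝ (Fin k))‖ = 1 := by simp
    have h0 : (x : EuclideanSpace ℝ (Fin k)) ≠ 0 := by intro h; rw [h] at hx; simp at hx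
    obtain ⟨j, hj⟩ : ∃ j, (x : EuclideanSpace ℝ (Fin k)) j ≠ 0 := by
      by_contra! h
      exact h0 (by ext j; simpa using h j)
    refine (Finset.sum_pos' (fun j _ => by positivity) ⟨j, Finset.mem_univ _, ?_⟩).ne'
    have := hε j
    positivity
  have hintS : Integrable (fun x : Metric.sphere (0 : EuclideanSpace ℝ (Fin k)) 1 =>
      (∑ j, ε j ^ 2 * ((x : EuclideanSpace ℝ (Fin k)) j) ^ 2) ^ (-(((k : ℝ) + 2 * s) / 2)))
      (volume : Measure (EuclideanSpace ℝ (Fin k))).toSphere :=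
    hcont.integrable_of_hasCompactSupport (HasCompactSupport.of_compactSpace _)
  have hnnS : 0 ≤ fun x : Metric.sphere (0 : EuclideanSpace ℝ (Fin k)) 1 =>
      (∑ j, ε j ^ 2 * ((x : EuclideanSpace ℝ (Fin k)) j) ^ 2) ^ (-(((k : ℝ) + 2 * s) / 2)) := by
    intro x; simp only [Pi.zero_apply]; positivity
  rw [← ofReal_integral_eq_lintegral_ofReal hintS (Filter.Eventually.of_forall hnnS)] at hM
  set S := ∫ x : Metric.sphere (0 : EuclideanSpace ℝ (Fin k)) 1,
        (∑ j, ε j ^ 2 * ((x : EuclideanSpace ℝ (Fin k)) j) ^ 2) ^ (-(((k : ℝ) + 2 * s) / 2))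
        ∂(volume : Measure (EuclideanSpace ℝ (Fin k))).toSphere
  have hS : 0 ≤ S := integral_nonneg hnnS
  have hnn : ∀ i, 0 ≤ᵐ[volume.restrict (Set.Ioi 0)] (fun t : ℝ =>
        t ^ (((k : ℝ) + 2 * s) / 2 - 1) / ((1 + t) * ∏ j, Real.sqrt (ε i ^ 2 + ε j ^ 2 * t))) := by
    intro i
    filter_upwards [ae_restrict_mem measurableSet_Ioi] with t ht
    have ht : 0 < t := ht
    simp only [Pi.zero_apply]; positivity
  have hI : ∀ i : Fin k, IntegrableOn (fun t : ℝ =>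
        t ^ (((k : ℝ) + 2 * s) / 2 - 1) / ((1 + t) * ∏ j, Real.sqrt (ε i ^ 2 + ε j ^ 2 * t)))
        (Set.Ioi 0) := by
    intro i
    refine (lintegral_ofReal_ne_top_iff_integrable (Measurable.aestronglyMeasurable (by fun_prop)) (hnn i)).1 ?_
    intro htop
    have hpi : ENNReal.ofReal (Real.pi ^ ((k:ℝ)/2) / 2) ≠ 0 := by simp; positivity
    have hei : ENNReal.ofReal (ε i ^ (-(2 * s))) ≠ 0 := by
      have := Real.rpow_pos_of_pos (hε i) (-(2*s))
      simpa using this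
    have hsum : ∑ i, ENNReal.ofReal (ε i ^ (-(2 * s))) * ∫⁻ t in Set.Ioi (0 : ℝ), ENNReal.ofReal (
          t ^ (((k : ℝ) + 2 * s) / 2 - 1) / ((1 + t) * ∏ j, Real.sqrt (ε i ^ 2 + ε j ^ 2 * t))) = ⊤ := by
      rw [ENNReal.sum_eq_top]
      exact ⟨i, Finset.mem_univ _, by rw [htop, ENNReal.mul_top hei]⟩
    rw [hsum, ENNReal.mul_top hpi] at hM
    exact (ENNReal.mul_ne_top ENNReal.ofReal_ne_top (ENNReal.mul_ne_top ENNReal.ofReal_ne_top ENNReal.ofReal_ne_top)) hM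
  refine ⟨hI, ?_⟩
  have hterm : ∀ i, ENNReal.ofReal (ε i ^ (-(2 * s))) * ∫⁻ t in Set.Ioi (0 : ℝ), ENNReal.ofReal (
          t ^ (((k : ℝ) + 2 * s) / 2 - 1) / ((1 + t) * ∏ j, Real.sqrt (ε i ^ 2 + ε j ^ 2 * t))) =
      ENNReal.ofReal (ε i ^ (-(2 * s)) * ∫ t in Set.Ioi (0 : ℝ), 
          t ^ (((k : ℝ) + 2 * s) / 2 - 1) / ((1 + t) * ∏ j, Real.sqrt (ε i ^ 2 + ε j ^ 2 * t))) := by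
    intro i
    rw [← ofReal_integral_eq_lintegral_ofReal (hI i) (hnn i),
      ENNReal.ofReal_mul (Real.rpow_nonneg (hε i).le _)]
  have hnt : ∀ i, 0 ≤ ε i ^ (-(2 * s)) * ∫ t in Set.Ioi (0 : ℝ), 
          t ^ (((k : ℝ) + 2 * s) / 2 - 1) / ((1 + t) * ∏ j, Real.sqrt (ε i ^ 2 + ε j ^ 2 * t)) := fun i =>
    mul_nonneg (Real.rpow_nonneg (hε i).le _) (integral_nonneg_of_ae (hnn i))
  simp only [hterm] at hM
  rw [← ENNReal.ofReal_sum_of_nonneg (fun i _ => hnt i), ← ENNReal.ofReal_mul (by positivity),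
    ← ENNReal.ofReal_mul (by positivity), ← ENNReal.ofReal_mul (by positivity),
    ENNReal.ofReal_eq_ofReal_iff (by positivity)
      (mul_nonneg (by positivity) (Finset.sum_nonneg fun i _ => hnt i))] at hM
  rw [div_mul_eq_mul_div, eq_div_iff (by positivity)]
  linarith
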